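/- Let n ≤ q be positive integers and let μ be the probability measure on n×q real matrices under which all entries are i.i.d. standard Gaussian N(0,1). Then ∫ log det(X Xᵀ) dμ(X) = Σ_{j=0}^{n−1} (ψ((q−j)/2) + log 2), where ψ(a) = deriv (log ∘ Γ) a is the digamma function. -/

import Mathlib

open MeasureTheory ProbabilityTheory Matrix

/-- The standard Gaussian measure on `ι → ℝ` has the product of the Gaussian densities as its
density. -/
lemma pi_gaussianReal_eq_withDensity (ι : Type*) [Fintype ι] :
    Measure.pi (fun _ : ι => gaussianReal 0 1) =
      (volume : Measure (ι → ℝ)).withDensity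
        (fun x => ENNReal.ofReal (∏ i, gaussianPDFReal 0 1 (x i))) := by
  refine Measure.pi_eq fun s hs => ?_
  have hint : ∀ i, Integrable ((s i).indicator (gaussianPDFReal 0 1)) :=
    fun i => (integrable_gaussianPDFReal 0 1).indicator (hs i)
  have hnn : ∀ i x, 0 ≤ (s i).indicator (gaussianPDFReal 0 1) x :=
    fun i x => Set.indicator_nonneg (fun _ _ => gaussianPDFReal_nonneg _ _ _) _
  have hind : (Set.univ.pi s).indicator
      (fun x : ι → ℝ => ENNReal.ofReal (∏ i, gaussianPDFReal 0 1 (x i))) =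
      fun x => ENNReal.ofReal (∏ i, (s i).indicator (gaussianPDFReal 0 1) (x i)) := by
    classical
    funext x
    by_cases hx : x ∈ Set.univ.pi s
    · rw [Set.indicator_of_mem hx]
      congr 1
      exact Finset.prod_congr rfl fun i _ => (Set.indicator_of_mem (hx i trivial) _).symm
    · rw [Set.indicator_of_notMem hx]
      obtain ⟨i, hi⟩ : ∃ i, x i ∉ s i := by simpa [Set.mem_univ_pi] using hx
      rw [Finset.prod_eq_zero (Finset.mem_univ i) (Set.indicator_of_notMem hi _),
        ENNReal.ofReal_zero]
  rw [withDensity_apply _ (MeasurableSet.univ_pi hs),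
    ← lintegral_indicator (MeasurableSet.univ_pi hs), hind,
    ← ofReal_integral_eq_lintegral_ofReal
      (volume_pi (α := fun _ : ι => ℝ) ▸ Integrable.fintype_prod hint)
      (Filter.Eventually.of_forall fun x => Finset.prod_nonneg fun i _ => hnn i _),
    integral_fintype_prod_volume_eq_prod,
    ENNReal.ofReal_prod_of_nonneg fun i _ => integral_nonneg (hnn i)]
  refine Finset.prod_congr rfl fun i _ => ?_
  rw [integral_indicator (hs i), gaussianReal_apply_eq_integral _ one_ne_zero]

/-- Integrals of functions of the squared Euclidean norm against the standard Gaussian measure are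
proportional to integrals against a gamma distribution. -/
lemma integral_sum_sq_pi_gaussianReal (ι : Type*) [Fintype ι] [Nonempty ι] :
    ∃ C : ℝ, ∀ f : ℝ → ℝ,
      ∫ z : ι → ℝ, f (∑ i, z i ^ 2) ∂(Measure.pi fun _ : ι => gaussianReal 0 1) =
        C * ∫ x, f x ∂(gammaMeasure ((Fintype.card ι : ℝ) / 2) (1 / 2)) := by
  set a : ℝ := (Fintype.card ι : ℝ) / 2 with ha
  have hk : 0 < Fintype.card ι := Fintype.card_pos
  have ha0 : 0 < a := by positivity
  let D : ℝ := (√(2 * Real.pi))⁻¹ ^ Fintype.card ι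
  let V : ℝ := Fintype.card ι * (volume : Measure (EuclideanSpace ℝ ι)).real (Metric.ball 0 1)
  have hG : 0 < (1 / 2 : ℝ) ^ a / Real.Gamma a := by
    have := Real.Gamma_pos_of_pos ha0
    positivity
  refine ⟨D * V * 2⁻¹ * ((1 / 2 : ℝ) ^ a / Real.Gamma a)⁻¹, fun f => ?_⟩
  have hdens : ∀ x : ι → ℝ, ∏ i, gaussianPDFReal 0 1 (x i) =
      D * Real.exp (-(1 / 2 * ∑ i, x i ^ 2)) := by
    intro x
    simp only [gaussianPDFReal, Finset.prod_mul_distrib, ← Real.exp_sum, D]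
    simp [Finset.mul_sum, div_eq_inv_mul]
  have h1 : ∫ z : ι → ℝ, f (∑ i, z i ^ 2) ∂(Measure.pi fun _ : ι => gaussianReal 0 1) =
      D * ∫ z : ι → ℝ, Real.exp (-(1 / 2 * ∑ i, z i ^ 2)) * f (∑ i, z i ^ 2) := by
    rw [pi_gaussianReal_eq_withDensity, integral_withDensity_eq_integral_toReal_smul
      (by fun_prop) (by simp), ← integral_const_mul]
    refine integral_congr_ae (.of_forall fun x => ?_)
    simp only [smul_eq_mul]
    rw [ENNReal.toReal_ofReal (Finset.prod_nonneg fun i _ => gaussianPDFReal_nonneg _ _ _),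
      hdens, mul_assoc]
  have h2 : ∫ z : ι → ℝ, Real.exp (-(1 / 2 * ∑ i, z i ^ 2)) * f (∑ i, z i ^ 2) =
      V * ∫ y in Set.Ioi (0 : ℝ), y ^ (Fintype.card ι - 1) *
        (Real.exp (-(1 / 2 * y ^ 2)) * f (y ^ 2)) := by
    have := integral_fun_norm_addHaar (volume : Measure (EuclideanSpace ℝ ι))
      (fun y => Real.exp (-(1 / 2 * y ^ 2)) * f (y ^ 2))
    simp only [finrank_euclideanSpace, nsmul_eq_mul, smul_eq_mul, ← mul_assoc] at this
    simp only [V, ← mul_assoc]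
    rw [← this, ← (PiLp.volume_preserving_toLp ι).integral_comp
      (MeasurableEquiv.toLp 2 (ι → ℝ)).measurableEmbedding]
    simp [EuclideanSpace.real_norm_sq_eq]
  have h3 : ∫ y in Set.Ioi (0 : ℝ), y ^ (Fintype.card ι - 1) *
        (Real.exp (-(1 / 2 * y ^ 2)) * f (y ^ 2)) =
      2⁻¹ * ∫ u in Set.Ioi (0 : ℝ), u ^ (a - 1) * (Real.exp (-(1 / 2 * u)) * f u) := by
    rw [← integral_comp_rpow_Ioi_of_pos
      (g := fun u => u ^ (a - 1) * (Real.exp (-(1 / 2 * u)) * f u)) two_pos, ← integral_const_mul]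
    refine setIntegral_congr_fun measurableSet_Ioi fun y hy => ?_
    have hy : 0 < y := hy
    have : y ^ (Fintype.card ι - 1) = y * (y ^ (2 : ℝ)) ^ (a - 1) := by
      rw [← Real.rpow_mul hy.le, ← Real.rpow_natCast,
        show ((Fintype.card ι - 1 : ℕ) : ℝ) = 1 + 2 * (a - 1) by
          rw [Nat.cast_sub hk, ha]; push_cast; ring,
        Real.rpow_add hy, Real.rpow_one]
    simp only [smul_eq_mul]
    rw [this, show (2 : ℝ) - 1 = 1 by norm_num, Real.rpow_one]
    simp only [Real.rpow_ofNat]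
    ring
  have h4 : ∫ x, f x ∂(gammaMeasure a (1 / 2)) = ((1 / 2 : ℝ) ^ a / Real.Gamma a) *
      ∫ u in Set.Ioi (0 : ℝ), u ^ (a - 1) * (Real.exp (-(1 / 2 * u)) * f u) := by
    rw [gammaMeasure, integral_withDensity_eq_integral_toReal_smul
      (by unfold gammaPDF; fun_prop) (by simp [gammaPDF]), ← integral_const_mul,
      ← integral_Ici_eq_integral_Ioi, ← integral_indicator measurableSet_Ici]
    refine integral_congr_ae (.of_forall fun x => ?_)
    by_cases hx : 0 ≤ x
    · simp only [gammaPDF, smul_eq_mul]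
      rw [ENNReal.toReal_ofReal (gammaPDFReal_nonneg ha0 (by norm_num) _),
        Set.indicator_of_mem (show x ∈ Set.Ici 0 from hx), gammaPDFReal, if_pos hx]
      ring
    · simp [gammaPDF, gammaPDFReal, hx]
  rw [h1, h2, h3, h4]
  field_simp

/-- The chi-squared distribution is a gamma distribution. -/
lemma map_sum_sq_pi_gaussianReal (ι : Type*) [Fintype ι] [Nonempty ι] :
    (Measure.pi fun _ : ι => gaussianReal 0 1).map (fun z => ∑ i, z i ^ 2) =
      gammaMeasure ((Fintype.card ι : ℝ) / 2) (1 / 2) := by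
  have hk : 0 < Fintype.card ι := Fintype.card_pos
  have : IsProbabilityMeasure (gammaMeasure ((Fintype.card ι : ℝ) / 2) (1 / 2)) :=
    isProbabilityMeasure_gammaMeasure (by positivity) (by norm_num)
  have hm : Measurable fun z : ι → ℝ => ∑ i, z i ^ 2 := by fun_prop
  have := Measure.isProbabilityMeasure_map (μ := Measure.pi fun _ : ι => gaussianReal 0 1)
    hm.aemeasurable
  obtain ⟨C, hC⟩ := integral_sum_sq_pi_gaussianReal ι
  have hC1 : C = 1 := by
    have h := hC fun _ => 1
    simpa only [integral_const, probReal_univ, smul_eq_mul, mul_one] using h.symm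
  refine Measure.ext fun s hs => ?_
  have h := hC (s.indicator 1)
  rw [← integral_map (φ := fun z : ι → ℝ => ∑ i, z i ^ 2) hm.aemeasurable
    ((measurable_one.indicator hs).aestronglyMeasurable),
    integral_indicator_one hs, integral_indicator_one hs, hC1, one_mul] at h
  exact (measureReal_eq_measureReal_iff).1 h

open Filter Topology Asymptotics in
/-- Differentiation of the Gamma integral under the integral sign, on the positive reals. -/
lemma Real.integrableOn_and_hasDerivAt_Gamma {a : ℝ} (ha : 0 < a) :
    IntegrableOn (fun t : ℝ => t ^ (a - 1) * (Real.log t * Real.exp (-t))) (Set.Ioi 0) ∧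
    HasDerivAt Real.Gamma
      (∫ t in Set.Ioi (0 : ℝ), t ^ (a - 1) * (Real.log t * Real.exp (-t))) a := by
  have hcast : ∀ t ∈ Set.Ioi (0 : ℝ), (t : ℂ) ^ ((a : ℂ) - 1) * (Real.log t * Real.exp (-t)) =
      ((t ^ (a - 1) * (Real.log t * Real.exp (-t)) : ℝ) : ℂ) := by
    intro t ht
    have ht : 0 < t := ht
    push_cast
    rw [Complex.ofReal_cpow ht.le]
    push_cast
    rfl
  have hre : 0 < (a : ℂ).re := by simpa using ha
  constructor
  · have h := (mellin_hasDerivAt_of_isBigO_rpow (E := ℂ) (a := (a : ℂ).re + 1) (b := 0)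
      (f := fun t => (Real.exp (-t) : ℂ)) (s := a) ?_ ?_ (lt_add_one _) ?_ hre).1
    · have h' : IntegrableOn (fun t : ℝ =>
          ((t ^ (a - 1) * (Real.log t * Real.exp (-t)) : ℝ) : ℂ)) (Set.Ioi 0) := by
        refine IntegrableOn.congr_fun h (fun t ht => ?_) measurableSet_Ioi
        rw [← hcast t ht]
        simp
      exact h'.re
    · exact (Continuous.continuousOn (by fun_prop)).locallyIntegrableOn measurableSet_Ioi
    · rw [← isBigO_norm_left]
      simp_rw [Complex.norm_real, isBigO_norm_left]
      simpa only [neg_one_mul] using (isLittleO_exp_neg_mul_rpow_atTop zero_lt_one _).isBigO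
    · simp_rw [neg_zero, Real.rpow_zero]
      refine isBigO_const_of_tendsto (?_ : Tendsto _ _ (𝓝 (1 : ℂ))) one_ne_zero
      have : Continuous fun t : ℝ => (Real.exp (-t) : ℂ) := by fun_prop
      simpa using (this.tendsto 0).mono_left nhdsWithin_le_nhds
  · have h := Complex.hasDerivAt_GammaIntegral hre
    rw [setIntegral_congr_fun measurableSet_Ioi hcast, integral_complex_ofReal] at h
    have h2 := h.real_of_complex
    simp only [Complex.ofReal_re] at h2
    refine h2.congr_of_eventuallyEq ?_
    filter_upwards [lt_mem_nhds ha] with x hx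
    rw [← Complex.Gamma_eq_integral (by simpa using hx), Complex.Gamma_ofReal, Complex.ofReal_re]

/-- The expected logarithm of a gamma-distributed random variable. -/
lemma integrable_log_gammaMeasure_and_integral {a r : ℝ} (ha : 0 < a) (hr : 0 < r) :
    Integrable Real.log (gammaMeasure a r) ∧
    ∫ x, Real.log x ∂(gammaMeasure a r) =
      deriv (Real.log ∘ Real.Gamma) a - Real.log r := by
  have hG := Real.Gamma_pos_of_pos ha
  obtain ⟨hint, hder⟩ := Real.integrableOn_and_hasDerivAt_Gamma ha
  have hint0 : IntegrableOn (fun t : ℝ => Real.exp (-t) * t ^ (a - 1)) (Set.Ioi 0) :=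
    Real.GammaIntegral_convergent ha
  let F : ℝ → ℝ := fun t => (Real.Gamma a)⁻¹ * (t ^ (a - 1) * (Real.log t * Real.exp (-t))) -
    (Real.Gamma a)⁻¹ * Real.log r * (Real.exp (-t) * t ^ (a - 1))
  have hF : IntegrableOn F (Set.Ioi 0) := (hint.const_mul _).sub (hint0.const_mul _)
  have hFint : ∫ t in Set.Ioi 0, F t =
      deriv (Real.log ∘ Real.Gamma) a - Real.log r := by
    rw [integral_sub (hint.const_mul _) (hint0.const_mul _), integral_const_mul,
      integral_const_mul, ← Real.Gamma_eq_integral ha, 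
      show deriv (Real.log ∘ Real.Gamma) a = _ from (hder.log hG.ne').deriv]
    field_simp
  have hind : (fun x => (gammaPDF a r x).toReal • Real.log x) =ᵐ[volume]
      (Set.Ioi 0).indicator (fun x => r * F (r * x)) := by
    filter_upwards [Measure.ae_ne volume (0 : ℝ)] with x hx0
    rcases lt_or_gt_of_ne hx0 with hx | hx
    · simp [gammaPDF, gammaPDFReal, hx.not_ge, hx.not_gt]
    · rw [Set.indicator_of_mem (show x ∈ Set.Ioi 0 from hx), gammaPDF,
        ENNReal.toReal_ofReal (gammaPDFReal_nonneg ha hr _), gammaPDFReal, if_pos hx.le]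
      simp only [F, smul_eq_mul]
      rw [Real.mul_rpow hr.le hx.le, Real.log_mul hr.ne' hx.ne', Real.rpow_sub_one hr.ne']
      field_simp
      ring
  have hmeas : Measurable (gammaPDF a r) := by unfold gammaPDF; fun_prop
  have hfin : ∀ᵐ x, gammaPDF a r x < ⊤ := by simp [gammaPDF]
  constructor
  · rw [gammaMeasure, integrable_withDensity_iff_integrable_smul' hmeas hfin,
      integrable_congr hind, integrable_indicator_iff measurableSet_Ioi]
    exact ((integrableOn_Ioi_comp_mul_left_iff F 0 hr).2 (by simpa using hF)).const_mul _
  · rw [gammaMeasure, integral_withDensity_eq_integral_toReal_smul hmeas hfin,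
      integral_congr_ae hind, integral_indicator measurableSet_Ioi, integral_const_mul,
      integral_comp_mul_left_Ioi F 0 hr, mul_zero, hFint, smul_eq_mul,
      mul_inv_cancel_left₀ hr.ne']

/-- The squared norm of an orthogonal projection of a standard Gaussian vector is chi-squared
distributed, with as many degrees of freedom as the rank of the projection. -/
lemma map_dotProduct_mulVec_pi_gaussianReal {ι : Type*} [Fintype ι] [DecidableEq ι]
    {P : Matrix ι ι ℝ} (hP : P.IsHermitian) (hPP : IsIdempotentElem P) (htr : 0 < P.trace) :
    (Measure.pi fun _ : ι => gaussianReal 0 1).map (fun y => y ⬝ᵥ P *ᵥ y) =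
      gammaMeasure (P.trace / 2) (1 / 2) := by
  set b := hP.eigenvectorBasis
  have hev : ∀ i, hP.eigenvalues i = if hP.eigenvalues i = 1 then 1 else 0 := by
    intro i
    have h := hPP.spectrum_subset ℝ (hP.eigenvalues_mem_spectrum_real i)
    rcases h with h | h
    · simp [h]
    · simp [Set.mem_singleton_iff.1 h]
  have htrace : P.trace = (Fintype.card {i // hP.eigenvalues i = 1} : ℝ) := by
    rw [hP.trace_eq_sum_eigenvalues, Fintype.card_subtype, Finset.card_filter]
    push_cast
    exact Finset.sum_congr rfl fun i _ => hev i
  have : Nonempty {i // hP.eigenvalues i = 1} := by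
    rw [htrace] at htr
    exact Fintype.card_pos_iff.1 (by exact_mod_cast htr)
  have hquad : ∀ x : ι → ℝ,
      (WithLp.ofLp (∑ i, x i • b i)) ⬝ᵥ P *ᵥ (WithLp.ofLp (∑ i, x i • b i)) =
        ∑ i : {i // hP.eigenvalues i = 1}, x i ^ 2 := by
    intro x
    have hPx : P *ᵥ (WithLp.ofLp (∑ i, x i • b i)) =
        WithLp.ofLp (∑ i, (hP.eigenvalues i * x i) • b i) := by
      simp only [WithLp.ofLp_sum, WithLp.ofLp_smul, mulVec_sum, mulVec_smul, b,
        hP.mulVec_eigenvectorBasis, smul_smul, mul_comm]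
    have hin : ∀ u v : EuclideanSpace ℝ ι, u.ofLp ⬝ᵥ v.ofLp = inner ℝ v u := by
      intro u v
      simp [EuclideanSpace.inner_eq_star_dotProduct]
    rw [hPx, hin, b.orthonormal.inner_sum, ← Finset.sum_subtype (p := fun i =>
      hP.eigenvalues i = 1) (Finset.univ.filter fun i => hP.eigenvalues i = 1) (by simp)
      (fun i => x i ^ 2), Finset.sum_filter]
    refine Finset.sum_congr rfl fun i _ => ?_
    by_cases h : hP.eigenvalues i = 1
    · simp [h, sq]
    · have h0 := hev i
      rw [if_neg h] at h0
      simp [h0]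
  have hrot : (Measure.pi fun _ : ι => gaussianReal 0 1).map
      (fun x => WithLp.ofLp (∑ i, x i • b i)) = Measure.pi fun _ : ι => gaussianReal 0 1 := by
    have h := (map_pi_eq_stdGaussian (ι := ι)).trans (stdGaussian_eq_map_pi_orthonormalBasis b)
    have h' := congrArg (Measure.map WithLp.ofLp) h
    rw [Measure.map_map (by fun_prop) (by fun_prop), Measure.map_map (by fun_prop) (by fun_prop)]
      at h'
    simpa [Function.comp_def] using h'.symm
  have hres : (Measure.pi fun _ : ι => gaussianReal 0 1).map
      (fun x (i : {i // hP.eigenvalues i = 1}) => x i) =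
      Measure.pi fun _ => gaussianReal 0 1 :=
    ((measurePreserving_fst).comp (measurePreserving_piEquivPiSubtypeProd
      (fun _ : ι => gaussianReal 0 1) (fun i => hP.eigenvalues i = 1))).map_eq
  rw [htrace, ← map_sum_sq_pi_gaussianReal, ← hres, Measure.map_map (by fun_prop) (by fun_prop)]
  conv_lhs => rw [← hrot]
  rw [Measure.map_map (by fun_prop) (by fun_prop)]
  congr 1
  funext x
  exact hquad x

/-- Adding a row `y` multiplies the Gram determinant by the squared distance from `y` to the span
of the other rows. -/
lemma Matrix.det_cons_mul_transpose {n q : ℕ} (y : Fin q → ℝ) (Z : Fin n → Fin q → ℝ)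
    (hdet : (Matrix.of Z * (Matrix.of Z)ᵀ).det ≠ 0) :
    (Matrix.of (Fin.cons y Z : Fin (n + 1) → Fin q → ℝ) *
        (Matrix.of (Fin.cons y Z : Fin (n + 1) → Fin q → ℝ))ᵀ).det =
      (Matrix.of Z * (Matrix.of Z)ᵀ).det *
        (y ⬝ᵥ (1 - (Matrix.of Z)ᵀ * (Matrix.of Z * (Matrix.of Z)ᵀ)⁻¹ * Matrix.of Z) *ᵥ y) := by
  set Y : Matrix (Fin n) (Fin q) ℝ := Matrix.of Z with hY
  have := invertibleOfIsUnitDet _ hdet.isUnit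
  let e : Fin n ⊕ Unit ≃ Fin (n + 1) :=
    (Equiv.optionEquivSumPUnit (Fin n)).symm.trans (finSuccEquiv n).symm
  have hblock : (Matrix.of (Fin.cons y Z : Fin (n + 1) → Fin q → ℝ) *
        (Matrix.of (Fin.cons y Z : Fin (n + 1) → Fin q → ℝ))ᵀ).submatrix e e =
      fromBlocks (Y * Yᵀ) (Y * replicateCol Unit y) (replicateRow Unit y * Yᵀ)
        (replicateRow Unit y * replicateCol Unit y) := by
    ext (i | i) (j | j) <;> simp [e, hY, Matrix.mul_apply]
  have hschur : replicateRow Unit y * replicateCol Unit y -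
      replicateRow Unit y * Yᵀ * (Y * Yᵀ)⁻¹ * (Y * replicateCol Unit y) =
      replicateRow Unit y * ((1 - Yᵀ * (Y * Yᵀ)⁻¹ * Y) * replicateCol Unit y) := by
    simp only [Matrix.sub_mul, Matrix.mul_sub, Matrix.one_mul, Matrix.mul_assoc]
  rw [← det_submatrix_equiv_self e, hblock, det_fromBlocks₁₁, invOf_eq_nonsing_inv, hschur,
    det_unique (n := Unit), ← replicateCol_mulVec, replicateRow_mul_replicateCol_apply]

lemma Matrix.isHermitian_one_sub_rowProj {n q : ℕ} (Y : Matrix (Fin n) (Fin q) ℝ) :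
    (1 - Yᵀ * (Y * Yᵀ)⁻¹ * Y).IsHermitian := by
  rw [IsHermitian, conjTranspose_eq_transpose_of_trivial]
  simp [transpose_nonsing_inv, Matrix.mul_assoc]

lemma Matrix.isIdempotentElem_one_sub_rowProj {n q : ℕ} {Y : Matrix (Fin n) (Fin q) ℝ}
    (hdet : (Y * Yᵀ).det ≠ 0) :
    IsIdempotentElem (1 - Yᵀ * (Y * Yᵀ)⁻¹ * Y) := by
  refine IsIdempotentElem.one_sub ?_
  rw [IsIdempotentElem]
  calc Yᵀ * (Y * Yᵀ)⁻¹ * Y * (Yᵀ * (Y * Yᵀ)⁻¹ * Y)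
      = Yᵀ * (Y * Yᵀ)⁻¹ * ((Y * Yᵀ) * (Y * Yᵀ)⁻¹) * Y := by simp only [Matrix.mul_assoc]
    _ = _ := by rw [mul_nonsing_inv _ hdet.isUnit, Matrix.mul_one]

lemma Matrix.trace_one_sub_rowProj {n q : ℕ} {Y : Matrix (Fin n) (Fin q) ℝ}
    (hdet : (Y * Yᵀ).det ≠ 0) :
    (1 - Yᵀ * (Y * Yᵀ)⁻¹ * Y).trace = (q : ℝ) - n := by
  rw [trace_sub, trace_mul_comm, ← Matrix.mul_assoc, mul_nonsing_inv _ hdet.isUnit]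
  simp

/-- Adding an independent Gaussian row multiplies the Gram determinant by a chi-squared
factor. -/
lemma map_det_div_det_pi_gaussianReal {n q : ℕ} (hnq : n < q)
    (hdet : ∀ᵐ Y : Fin n → Fin q → ℝ
      ∂(Measure.pi fun _ : Fin n => Measure.pi fun _ : Fin q => gaussianReal 0 1),
      (Matrix.of Y * (Matrix.of Y)ᵀ).det ≠ 0) :
    (Measure.pi fun _ : Fin (n + 1) => Measure.pi fun _ : Fin q => gaussianReal 0 1).map
      (fun X => (Matrix.of X * (Matrix.of X)ᵀ).det /
        (Matrix.of (Fin.tail X) * (Matrix.of (Fin.tail X))ᵀ).det) =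
      gammaMeasure (((q : ℝ) - n) / 2) (1 / 2) := by
  have hq : (0 : ℝ) < q - n := sub_pos.2 (by exact_mod_cast hnq)
  have hmp := (measurePreserving_piFinSuccAbove
    (fun _ : Fin (n + 1) => Measure.pi fun _ : Fin q => gaussianReal 0 1) 0).symm
  have hmeas : Measurable fun X : Fin (n + 1) → Fin q → ℝ =>
      (Matrix.of X * (Matrix.of X)ᵀ).det /
        (Matrix.of (Fin.tail X) * (Matrix.of (Fin.tail X))ᵀ).det := by
    simp only [Matrix.det_apply, Matrix.mul_apply, Matrix.transpose_apply, Matrix.of_apply,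
      Fin.tail]
    fun_prop
  rw [← hmp.map_eq, Measure.map_map hmeas (MeasurableEquiv.measurable _)]
  have hmeas' := hmeas.comp (MeasurableEquiv.piFinSuccAbove
    (fun _ : Fin (n + 1) => Fin q → ℝ) 0).symm.measurable
  refine Measure.ext fun s hs => ?_
  rw [Measure.map_apply hmeas' hs, Measure.prod_apply_symm (hmeas' hs),
    lintegral_congr_ae (g := fun _ => gammaMeasure (((q : ℝ) - n) / 2) (1 / 2) s), lintegral_const,
    measure_univ, mul_one]
  filter_upwards [hdet] with Y hY
  rw [← Matrix.trace_one_sub_rowProj hY, ← map_dotProduct_mulVec_pi_gaussianReal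
    (Matrix.isHermitian_one_sub_rowProj _) (Matrix.isIdempotentElem_one_sub_rowProj hY)
    (by rw [Matrix.trace_one_sub_rowProj hY]; exact hq), Measure.map_apply (by fun_prop) hs]
  congr 1
  ext y
  have h := Matrix.det_cons_mul_transpose y Y hY
  have h2 : ((MeasurableEquiv.piFinSuccAbove (fun _ : Fin (n + 1) => Fin q → ℝ) 0).symm (y, Y)) =
    Fin.cons y Y :=
    Fin.insertNth_zero (α := fun _ => Fin q → ℝ) y Y
  simp only [Set.mem_preimage, Function.comp_apply, h2, Fin.tail_cons]
  rw [h, mul_div_cancel_left₀ _ hY]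

/-- The Gram determinant of a Gaussian matrix is almost surely nonzero, and its logarithm is
integrable with an explicit expectation. -/
lemma log_det_mul_transpose_pi_gaussianReal {n q : ℕ} (hnq : n ≤ q) :
    (∀ᵐ X : Fin n → Fin q → ℝ
      ∂(Measure.pi fun _ : Fin n => Measure.pi fun _ : Fin q => gaussianReal 0 1),
      (Matrix.of X * (Matrix.of X)ᵀ).det ≠ 0) ∧
    Integrable (fun X : Fin n → Fin q → ℝ => Real.log (Matrix.of X * (Matrix.of X)ᵀ).det)
      (Measure.pi fun _ : Fin n => Measure.pi fun _ : Fin q => gaussianReal 0 1) ∧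
    ∫ X : Fin n → Fin q → ℝ, Real.log (Matrix.of X * (Matrix.of X)ᵀ).det
      ∂(Measure.pi fun _ : Fin n => Measure.pi fun _ : Fin q => gaussianReal 0 1) =
      ∑ j ∈ Finset.range n,
        (deriv (Real.log ∘ Real.Gamma) (((q : ℝ) - j) / 2) + Real.log 2) := by
  induction n with
  | zero => simp
  | succ n ih =>
    obtain ⟨hne, hint, hval⟩ := ih (by omega)
    set μ := Measure.pi fun _ : Fin (n + 1) => Measure.pi fun _ : Fin q => gaussianReal 0 1
    have htail : MeasurePreserving (fun X : Fin (n + 1) → Fin q → ℝ => Fin.tail X) μ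
        (Measure.pi fun _ : Fin n => Measure.pi fun _ : Fin q => gaussianReal 0 1) :=
      measurePreserving_snd.comp (measurePreserving_piFinSuccAbove
        (fun _ : Fin (n + 1) => Measure.pi fun _ : Fin q => gaussianReal 0 1) 0)
    let R : (Fin (n + 1) → Fin q → ℝ) → ℝ := fun X => (Matrix.of X * (Matrix.of X)ᵀ).det /
        (Matrix.of (Fin.tail X) * (Matrix.of (Fin.tail X))ᵀ).det
    have hRmeas : Measurable R := by
      simp only [R, Matrix.det_apply, Matrix.mul_apply, Matrix.transpose_apply, Matrix.of_apply,
        Fin.tail]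
      fun_prop
    have hR : MeasurePreserving R μ (gammaMeasure (((q : ℝ) - n) / 2) (1 / 2)) :=
      ⟨hRmeas, map_det_div_det_pi_gaussianReal (by omega) hne⟩
    have hq : (0 : ℝ) < q - n := sub_pos.2 (by exact_mod_cast hnq)
    obtain ⟨hlog, hlogval⟩ := integrable_log_gammaMeasure_and_integral
      (a := ((q : ℝ) - n) / 2) (r := 1 / 2) (by positivity) (by norm_num)
    have hRne : ∀ᵐ X ∂μ, R X ≠ 0 := hR.quasiMeasurePreserving.ae
      ((withDensity_absolutelyContinuous volume _).ae_le (Measure.ae_ne volume (0 : ℝ)))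
    have htne := htail.quasiMeasurePreserving.ae hne
    have hRint : Integrable (fun X => Real.log (R X)) μ := hR.integrable_comp_of_integrable hlog
    have htint : Integrable (fun X =>
        Real.log (Matrix.of (Fin.tail X) * (Matrix.of (Fin.tail X))ᵀ).det) μ :=
      htail.integrable_comp_of_integrable hint
    have hsum : (fun X => Real.log (Matrix.of X * (Matrix.of X)ᵀ).det) =ᵐ[μ] fun X =>
        Real.log (Matrix.of (Fin.tail X) * (Matrix.of (Fin.tail X))ᵀ).det + Real.log (R X) := by
      filter_upwards [hRne, htne] with X h1 h2
      rw [← Real.log_mul h2 h1, mul_div_cancel₀ _ h2]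
    refine ⟨?_, (integrable_congr hsum).2 (htint.add hRint), ?_⟩
    · filter_upwards [hRne] with X h1 h2
      exact h1 (by simp [R, h2])
    · have htval := integral_map (μ := μ) htail.measurable.aemeasurable
        (htail.map_eq.symm ▸ hint.aestronglyMeasurable)
      have hRval := integral_map (μ := μ) hR.measurable.aemeasurable
        (hR.map_eq.symm ▸ hlog.aestronglyMeasurable)
      rw [htail.map_eq, hval] at htval
      rw [hR.map_eq, hlogval, one_div, Real.log_inv, sub_neg_eq_add] at hRval
      rw [integral_congr_ae hsum, integral_add htint hRint, Finset.sum_range_succ, htval, hRval]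

/-- Expected log-determinant of a Wishart matrix: for `1 ≤ n ≤ q` and `X` an `n × q`
matrix of i.i.d. standard Gaussians,
`E_X log det (X Xᵀ) = Σ_{j<n} (ψ((q-j)/2) + log 2)`,
where `ψ = deriv (log ∘ Γ)` is the digamma function. -/
theorem expected_log_det_wishart {n q : ℕ} (hn : 1 ≤ n) (hnq : n ≤ q) :
    ∫ X : Fin n → Fin q → ℝ,
        Real.log (Matrix.of X * (Matrix.of X)ᵀ).det
      ∂(Measure.pi fun _ : Fin n => Measure.pi fun _ : Fin q => gaussianReal 0 1) =
      ∑ j ∈ Finset.range n,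
        (deriv (Real.log ∘ Real.Gamma) (((q : ℝ) - j) / 2) + Real.log 2) := by
  exact (log_det_mul_transpose_pi_gaussianReal hnq).2.2
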